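/- Let H be a bounded self-adjoint operator on a separable Hilbert space 𝓗 with spectrum contained in [a,b], and let A : [a,b] → B(𝓗) be Hölder continuous in operator norm with Hölder exponent k > 1/2, i.e. ‖A(α₁) − A(α₂)‖ ≤ C|α₁ − α₂|^k for some constant C > 0. Then the Riemann–Stieltjes sums Σ_i A(ξ_i) E_H(Δ_i) over partitions {Δ_i} of [a,b] (with tags ξ_i ∈ Δ_i) converge in operator norm as the mesh of the partition tends to 0; i.e. the spectral integral ∫_a^b A(α) E_H(dα) exists as an operator-norm Riemann–Stieltjes integral. -/

import Mathlib

open MeasureTheory Filter Topology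

noncomputable section

/-- A projection-valued spectral measure for a bounded self-adjoint operator `A`
on a complex Hilbert space: projection-valued, multiplicative, countably additive in
the strong topology, and reproducing `A` via its moment: for every vector `x`,
`re ⟪x, A x⟫ = ∫ t dν_x(t)` where `ν_x(s) = ‖E s x‖²`. -/
structure SpectralMeasure {H : Type*} [NormedAddCommGroup H] [InnerProductSpace ℂ H]
    [CompleteSpace H] (A : H →L[ℂ] H) where
  E : Set ℝ → H →L[ℂ] H
  idem : ∀ s, E s * E s = E s
  selfadj : ∀ s, IsSelfAdjoint (E s)
  empty : E ∅ = 0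
  univ' : E Set.univ = 1
  inter : ∀ s t, E (s ∩ t) = E s * E t
  countably_additive : ∀ f : ℕ → Set ℝ, (∀ n, MeasurableSet (f n)) →
    Pairwise (Function.onFun Disjoint f) → ∀ x : H, HasSum (fun n => E (f n) x) (E (⋃ n, f n) x)
  ν : H → Measure ℝ
  ν_eq : ∀ (x : H) (s : Set ℝ), MeasurableSet s → ν x s = ENNReal.ofReal (‖E s x‖ ^ 2)
  moment : ∀ x : H, (inner ℂ x (A x) : ℂ).re = ∫ t, t ∂(ν x)

/-- `IsRSIntegral F μ a b L` : the operator-norm Riemann–Stieltjes sums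
`Σ_i F(ξ_i) μ((t_i, t_{i+1}])` of the operator-valued function `F` against the
(projection-valued) set function `μ`, over tagged partitions
`a = t_0 < t_1 < ... < t_n = b` with tags `ξ_i ∈ [t_i, t_{i+1}]`, converge in operator
norm to `L` as the mesh tends to `0`. -/
def IsRSIntegral {H : Type*} [NormedAddCommGroup H] [InnerProductSpace ℂ H] [CompleteSpace H]
    (F : ℝ → H →L[ℂ] H) (μ : Set ℝ → H →L[ℂ] H) (a b : ℝ) (L : H →L[ℂ] H) : Prop :=
  ∀ ε > (0 : ℝ), ∃ δ > (0 : ℝ), ∀ (n : ℕ) (t ξ : ℕ → ℝ),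
    0 < n → t 0 = a → t n = b →
    (∀ i < n, t i < t (i + 1) ∧ t (i + 1) - t i < δ ∧ ξ i ∈ Set.Icc (t i) (t (i + 1))) →
    ‖(∑ i ∈ Finset.range n, F (ξ i) * μ (Set.Ioc (t i) (t (i + 1)))) - L‖ < ε

section Helpers
variable {H : Type*} [NormedAddCommGroup H] [InnerProductSpace ℂ H] [CompleteSpace H]
  {H₀ : H →L[ℂ] H}

lemma SM_add (EH : SpectralMeasure H₀) {u v w : ℝ} (huv : u ≤ v) (hvw : v ≤ w) :
    EH.E (Set.Ioc u w) = EH.E (Set.Ioc u v) + EH.E (Set.Ioc v w) := by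
  have hd : Disjoint (Set.Ioc u v) (Set.Ioc v w) := by
    rw [Set.disjoint_left]; intro x hx hy; exact absurd hx.2 (not_le.2 hy.1)
  ext x
  let f : ℕ → Set ℝ := fun n => if n = 0 then Set.Ioc u v else if n = 1 then Set.Ioc v w else ∅
  have h := EH.countably_additive f (by
      intro n; simp only [f]; split_ifs
      · exact measurableSet_Ioc
      · exact measurableSet_Ioc
      · exact MeasurableSet.empty) (by
      intro i j hij
      simp only [Function.onFun, f]
      split_ifs <;> first | omega | exact hd | exact hd.symm | simp) x
  have hU : (⋃ n, f n) = Set.Ioc u w := by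
    rw [← Set.Ioc_union_Ioc_eq_Ioc huv hvw]
    ext y
    simp only [Set.mem_iUnion, f]
    constructor
    · rintro ⟨n, hn⟩
      split_ifs at hn
      · exact Or.inl hn
      · exact Or.inr hn
      · exact absurd hn (Set.notMem_empty y)
    · rintro (hy | hy)
      · exact ⟨0, by simpa using hy⟩
      · exact ⟨1, by simpa using hy⟩
  rw [hU] at h
  have h2 : HasSum (fun n => EH.E (f n) x) (∑ n ∈ Finset.range 2, EH.E (f n) x) := by
    apply hasSum_sum_of_ne_finset_zero
    intro n hn
    have h0 : n ≠ 0 := by rintro rfl; simp at hn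
    have h1 : n ≠ 1 := by rintro rfl; simp at hn
    simp [f, h0, h1, EH.empty]
  have := h.unique h2
  rw [this]
  simp [Finset.sum_range_succ, f]

lemma SM_mono (t : ℕ → ℝ) (n : ℕ) (ht : ∀ i < n, t i ≤ t (i + 1)) :
    ∀ i j, i ≤ j → j ≤ n → t i ≤ t j := by
  intro i j hij hj
  induction j, hij using Nat.le_induction with
  | base => exact le_rfl
  | succ j hij ih => exact (ih (by omega)).trans (ht j (by omega))

lemma SM_sum (EH : SpectralMeasure H₀) (t : ℕ → ℝ) (n : ℕ) (ht : ∀ i < n, t i ≤ t (i + 1)) :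
    ∑ i ∈ Finset.range n, EH.E (Set.Ioc (t i) (t (i + 1))) = EH.E (Set.Ioc (t 0) (t n)) := by
  induction n with
  | zero => simp [EH.empty]
  | succ n ih =>
    rw [Finset.sum_range_succ, ih (fun i hi => ht i (by omega)), ← SM_add EH _ (ht n (by omega))]
    exact SM_mono t (n + 1) ht 0 n (by omega) (by omega)

lemma SM_bessel (EH : SpectralMeasure H₀) (s : ℕ → Set ℝ) (n : ℕ)
    (hm : ∀ i < n, MeasurableSet (s i))
    (hd : ∀ i < n, ∀ j < n, i ≠ j → Disjoint (s i) (s j)) (x : H) :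
    ∑ i ∈ Finset.range n, ‖EH.E (s i) x‖ ^ 2 ≤ ‖x‖ ^ 2 := by
  have h1 : EH.ν x (⋃ i ∈ Finset.range n, s i) = ∑ i ∈ Finset.range n, EH.ν x (s i) := by
    apply measure_biUnion_finset
    · intro i hi j hj hij
      exact hd i (by simpa using hi) j (by simpa using hj) hij
    · intro i hi; exact hm i (by simpa using hi)
  have h2 : EH.ν x (⋃ i ∈ Finset.range n, s i) ≤ EH.ν x Set.univ := measure_mono (Set.subset_univ _)
  rw [h1, EH.ν_eq x _ MeasurableSet.univ, EH.univ',
    Finset.sum_congr rfl (fun i hi => EH.ν_eq x (s i) (hm i (by simpa using hi))),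
    ← ENNReal.ofReal_sum_of_nonneg (fun _ _ => by positivity)] at h2
  simpa using (ENNReal.ofReal_le_ofReal_iff (by positivity)).1 h2

lemma SM_norm (EH : SpectralMeasure H₀) (s : ℕ → Set ℝ) (n : ℕ)
    (hm : ∀ i < n, MeasurableSet (s i))
    (hd : ∀ i < n, ∀ j < n, i ≠ j → Disjoint (s i) (s j))
    (B : ℕ → H →L[ℂ] H) (c : ℕ → ℝ) (hB : ∀ i < n, ‖B i * EH.E (s i)‖ ≤ c i)
    (K : ℝ) (hK : 0 ≤ K) (hc : ∑ i ∈ Finset.range n, c i ^ 2 ≤ K ^ 2) :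
    ‖∑ i ∈ Finset.range n, B i * EH.E (s i)‖ ≤ K := by
  apply ContinuousLinearMap.opNorm_le_bound _ hK
  intro x
  have h1 : ‖(∑ i ∈ Finset.range n, B i * EH.E (s i)) x‖ ≤
      ∑ i ∈ Finset.range n, c i * ‖EH.E (s i) x‖ := by
    rw [ContinuousLinearMap.sum_apply]
    refine (norm_sum_le _ _).trans (Finset.sum_le_sum fun i hi => ?_)
    have : (B i * EH.E (s i)) x = (B i * EH.E (s i)) (EH.E (s i) x) := by
      conv_lhs => rw [← EH.idem (s i), ← mul_assoc]
      rfl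
    rw [this]
    refine (ContinuousLinearMap.le_opNorm _ _).trans ?_
    gcongr
    exact hB i (by simpa using hi)
  refine h1.trans ?_
  have h2 := Finset.sum_mul_sq_le_sq_mul_sq (Finset.range n) c (fun i => ‖EH.E (s i) x‖)
  have h3 := SM_bessel EH s n hm hd x
  apply abs_le_of_sq_le_sq' _ (by positivity) |>.2
  rw [mul_pow]
  refine h2.trans ?_
  gcongr

lemma SM_Ioc_disj (t : ℕ → ℝ) (n : ℕ) (ht : ∀ i < n, t i ≤ t (i + 1)) :
    ∀ i < n, ∀ j < n, i ≠ j → Disjoint (Set.Ioc (t i) (t (i + 1))) (Set.Ioc (t j) (t (j + 1))) := by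
  have key : ∀ i j, i < j → j < n →
      Disjoint (Set.Ioc (t i) (t (i + 1))) (Set.Ioc (t j) (t (j + 1))) := by
    intro i j hij hj
    rw [Set.disjoint_left]
    intro x hx hy
    have := SM_mono t n ht (i + 1) j (by omega) (by omega)
    linarith [hx.2, hy.1]
  intro i hi j hj hij
  rcases lt_or_gt_of_ne hij with h | h
  · exact key i j h hj
  · exact (key j i h hi).symm

/-- Grid points. -/
def SMg (a h : ℝ) (j : ℕ) : ℝ := a + j * h

lemma SMg_succ (a h : ℝ) (j : ℕ) : SMg a h (j + 1) = SMg a h j + h := by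
  simp only [SMg]; push_cast; ring

/-- Grid sums. -/
def SMT (EH : SpectralMeasure H₀) (A : ℝ → H →L[ℂ] H) (a h : ℝ) (N : ℕ) : H →L[ℂ] H :=
  ∑ j ∈ Finset.range N, A (SMg a h j) * EH.E (Set.Ioc (SMg a h j) (SMg a h (j + 1)))

lemma SM_base (EH : SpectralMeasure H₀) (A : ℝ → H →L[ℂ] H) (a b C k h : ℝ) (N : ℕ)
    (hC : 0 < C) (hk : 1 / 2 < k) (hh : 0 < h) (hN : SMg a h N = b)
    (hHolder : ∀ α₁ ∈ Set.Icc a b, ∀ α₂ ∈ Set.Icc a b,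
      ‖A α₁ - A α₂‖ ≤ C * |α₁ - α₂| ^ k)
    (u v ξ : ℝ) (hau : a ≤ u) (huv : u ≤ v) (hvb : v ≤ b) (hξ : ξ ∈ Set.Icc u v)
    (hl : v - u ≤ h) :
    ‖(SMT EH A a h N - A ξ) * EH.E (Set.Ioc u v)‖ ≤ √2 * C * 2 ^ k * h ^ k := by
  have ht : ∀ i < N, SMg a h i ≤ SMg a h (i + 1) := fun i _ => by rw [SMg_succ]; linarith
  have h0 : SMg a h 0 = a := by simp [SMg]
  have hsum := SM_sum EH (SMg a h) N ht
  rw [h0, hN] at hsum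
  have hPE : EH.E (Set.Ioc a b) * EH.E (Set.Ioc u v) = EH.E (Set.Ioc u v) := by
    rw [← EH.inter, Set.inter_eq_right.2 (Set.Ioc_subset_Ioc hau hvb)]
  have heq : (SMT EH A a h N - A ξ) * EH.E (Set.Ioc u v) =
      ∑ j ∈ Finset.range N, (A (SMg a h j) - A ξ) *
        EH.E (Set.Ioc (SMg a h j) (SMg a h (j + 1)) ∩ Set.Ioc u v) := by
    rw [sub_mul]
    nth_rewrite 2 [← hPE]
    rw [← hsum, SMT, Finset.sum_mul, Finset.sum_mul, Finset.mul_sum, ← Finset.sum_sub_distrib]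
    refine Finset.sum_congr rfl fun j _ => ?_
    rw [EH.inter, sub_mul, mul_assoc]
  rw [heq]
  set p := ⌊(u - a) / h⌋₊ with hp
  have hpos : 0 ≤ C * (2 * h) ^ k := by positivity
  apply SM_norm EH _ N (fun i _ => measurableSet_Ioc.inter measurableSet_Ioc)
    (fun i hi j hj hij => (SM_Ioc_disj _ N ht i hi j hj hij).mono Set.inter_subset_left
      Set.inter_subset_left) _ (fun j => if j = p ∨ j = p + 1 then C * (2 * h) ^ k else 0)
  · intro j hj
    by_cases hne : (Set.Ioc (SMg a h j) (SMg a h (j + 1)) ∩ Set.Ioc u v).Nonempty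
    · obtain ⟨y, hy1, hy2⟩ := hne
      have hju : SMg a h j < v := hy1.1.trans_le hy2.2
      have huj : u < SMg a h (j + 1) := hy2.1.trans_le hy1.2
      rw [SMg_succ] at huj
      have hpj : j = p ∨ j = p + 1 := by
        have hx0 : 0 ≤ (u - a) / h := div_nonneg (by linarith) hh.le
        have h1 := Nat.floor_le hx0
        have h2 := Nat.lt_floor_add_one ((u - a) / h)
        rw [← hp] at h1 h2
        rw [le_div_iff₀ hh] at h1
        rw [div_lt_iff₀ hh] at h2
        simp only [SMg] at hju huj
        have h3 : (j : ℝ) < p + 2 := by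
          by_contra hcon; push Not at hcon
          nlinarith
        have h4 : (p : ℝ) < j + 1 := by
          by_contra hcon; push Not at hcon
          nlinarith
        have h3' : j < p + 2 := by exact_mod_cast h3
        have h4' : p < j + 1 := by exact_mod_cast h4
        omega
      rw [if_pos hpj]
      have hP : ‖EH.E (Set.Ioc (SMg a h j) (SMg a h (j + 1)) ∩ Set.Ioc u v)‖ ≤ 1 := by
        apply ContinuousLinearMap.opNorm_le_bound _ zero_le_one
        intro x
        have := SM_bessel EH (fun _ => Set.Ioc (SMg a h j) (SMg a h (j + 1)) ∩ Set.Ioc u v) 1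
          (fun i _ => measurableSet_Ioc.inter measurableSet_Ioc)
          (fun i hi j hj hij => by omega) x
        rw [Finset.sum_range_one] at this
        rw [one_mul]
        exact abs_le_of_sq_le_sq' this (norm_nonneg x) |>.2
      have hga : a ≤ SMg a h j := by
        have : (0 : ℝ) ≤ j * h := by positivity
        simp only [SMg]; linarith
      have hH := hHolder (SMg a h j) ⟨hga, by linarith⟩ ξ ⟨hau.trans hξ.1, hξ.2.trans hvb⟩
      have habs : |SMg a h j - ξ| ≤ 2 * h := by
        rw [abs_le]; constructor <;> linarith [hξ.1, hξ.2]
      have hkk : |SMg a h j - ξ| ^ k ≤ (2 * h) ^ k :=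
        Real.rpow_le_rpow (abs_nonneg _) habs (by linarith)
      calc _ ≤ ‖A (SMg a h j) - A ξ‖ * ‖EH.E (Set.Ioc (SMg a h j) (SMg a h (j + 1)) ∩ Set.Ioc u v)‖ :=
            norm_mul_le _ _
        _ ≤ ‖A (SMg a h j) - A ξ‖ * 1 := by gcongr
        _ ≤ C * (2 * h) ^ k := by rw [mul_one]; exact hH.trans (by gcongr)
    · rw [Set.not_nonempty_iff_eq_empty.1 hne, EH.empty, mul_zero, norm_zero]
      split_ifs
      · exact hpos
      · exact le_rfl
  · positivity
  · have : ∀ j, (if j = p ∨ j = p + 1 then C * (2 * h) ^ k else 0) ^ 2 ≤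
        (if j = p then (C * (2 * h) ^ k) ^ 2 else 0) +
        (if j = p + 1 then (C * (2 * h) ^ k) ^ 2 else 0) := by
      intro j
      by_cases h1 : j = p <;> by_cases h2 : j = p + 1 <;> simp [h1, h2]
    refine (Finset.sum_le_sum fun j _ => this j).trans ?_
    rw [Finset.sum_add_distrib, Finset.sum_ite_eq', Finset.sum_ite_eq']
    have h2 : (√2 * C * 2 ^ k * h ^ k) ^ 2 = 2 * (C * (2 * h) ^ k) ^ 2 := by
      rw [Real.mul_rpow (by norm_num) hh.le]
      have := Real.sq_sqrt (show (0 : ℝ) ≤ 2 by norm_num)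
      linear_combination (C * 2 ^ k * h ^ k) ^ 2 * this
    rw [h2]
    have := sq_nonneg (C * (2 * h) ^ k)
    split_ifs <;> linarith

lemma SM_dbl (EH : SpectralMeasure H₀) (A : ℝ → H →L[ℂ] H) (a b C k h M : ℝ)
    (hC : 0 < C) (hk : 1 / 2 < k) (hh : 0 < h)
    (hHolder : ∀ α₁ ∈ Set.Icc a b, ∀ α₂ ∈ Set.Icc a b,
      ‖A α₁ - A α₂‖ ≤ C * |α₁ - α₂| ^ k)
    (T : H →L[ℂ] H) (hM : √2 * (M + C) ≤ M * 2 ^ k) (hM0 : 0 ≤ M)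
    (hbase : ∀ u v ξ : ℝ, a ≤ u → u ≤ v → v ≤ b → ξ ∈ Set.Icc u v → v - u ≤ h →
      ‖(T - A ξ) * EH.E (Set.Ioc u v)‖ ≤ M * h ^ k) (j : ℕ) :
    ∀ u v ξ : ℝ, a ≤ u → u ≤ v → v ≤ b → ξ ∈ Set.Icc u v → v - u ≤ 2 ^ j * h →
      ‖(T - A ξ) * EH.E (Set.Ioc u v)‖ ≤ M * (2 ^ j * h) ^ k := by
  induction j with
  | zero => simpa using hbase
  | succ j ih =>
    intro u v ξ hau huv hvb hξ hl
    set r := 2 ^ j * h with hr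
    have hr0 : 0 < r := by positivity
    have hr2 : 2 ^ (j + 1) * h = 2 * r := by rw [hr]; ring
    rw [hr2] at hl ⊢
    let t : ℕ → ℝ := fun i => u + i * ((v - u) / 2)
    have ht : ∀ i < 2, t i ≤ t (i + 1) := by
      intro i _; simp only [t]; push_cast; linarith
    have t0 : t 0 = u := by simp [t]
    have t1 : t 1 = (u + v) / 2 := by simp [t]; ring
    have t2 : t 2 = v := by simp [t]; ring
    have hsum := SM_sum EH t 2 ht
    rw [t0, t2] at hsum
    rw [← hsum, Finset.mul_sum]
    have hmid : ‖A ((u + v) / 2) - A ξ‖ ≤ C * r ^ k := by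
      refine (hHolder _ ⟨by linarith, by linarith⟩ ξ ⟨by linarith [hξ.1], by linarith [hξ.2]⟩).trans ?_
      gcongr
      rw [abs_le]; constructor <;> linarith [hξ.1, hξ.2]
    have hpiece : ∀ i < 2, ‖(T - A ξ) * EH.E (Set.Ioc (t i) (t (i + 1)))‖ ≤ (M + C) * r ^ k := by
      intro i hi
      have hP : ‖EH.E (Set.Ioc (t i) (t (i + 1)))‖ ≤ 1 := by
        apply ContinuousLinearMap.opNorm_le_bound _ zero_le_one
        intro x
        have := SM_bessel EH (fun _ => Set.Ioc (t i) (t (i + 1))) 1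
          (fun i _ => measurableSet_Ioc)
          (fun i hi j hj hij => by omega) x
        rw [Finset.sum_range_one] at this
        rw [one_mul]
        exact abs_le_of_sq_le_sq' this (norm_nonneg x) |>.2
      have h1 : ‖(T - A ((u + v) / 2)) * EH.E (Set.Ioc (t i) (t (i + 1)))‖ ≤ M * r ^ k := by
        interval_cases i
        · rw [t0, zero_add, t1]
          exact ih _ _ _ (by linarith) (by linarith) (by linarith) ⟨by linarith, by linarith⟩
            (by linarith)
        · rw [one_add_one_eq_two, t1, t2]
          exact ih _ _ _ (by linarith) (by linarith) (by linarith) ⟨by linarith, by linarith⟩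
            (by linarith)
      have h2 : (T - A ξ) * EH.E (Set.Ioc (t i) (t (i + 1))) =
          (T - A ((u + v) / 2)) * EH.E (Set.Ioc (t i) (t (i + 1))) +
          (A ((u + v) / 2) - A ξ) * EH.E (Set.Ioc (t i) (t (i + 1))) := by
        rw [← add_mul]; congr 1; abel
      have h3 : ‖(A ((u + v) / 2) - A ξ) * EH.E (Set.Ioc (t i) (t (i + 1)))‖ ≤ C * r ^ k := by
        refine (norm_mul_le _ _).trans ?_
        refine (mul_le_of_le_one_right (norm_nonneg _) hP).trans hmid
      rw [h2, add_mul]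
      exact (norm_add_le _ _).trans (add_le_add h1 h3)
    apply SM_norm EH _ 2 (fun i _ => measurableSet_Ioc) (SM_Ioc_disj t 2 ht) _
      (fun _ => (M + C) * r ^ k) hpiece _ (by positivity)
    rw [Real.mul_rpow (by norm_num) hr0.le]
    have h5 : √2 * (M + C) * r ^ k ≤ M * (2 ^ k * r ^ k) := by
      rw [← mul_assoc]; gcongr
    have h6 := pow_le_pow_left₀ (by positivity) h5 2
    refine le_trans (le_of_eq ?_) h6
    have := Real.sq_sqrt (show (0 : ℝ) ≤ 2 by norm_num)
    simp only [Finset.sum_const, Finset.card_range, nsmul_eq_mul]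
    push_cast
    linear_combination (-((M + C) * r ^ k) ^ 2) * this

lemma SM_main (EH : SpectralMeasure H₀) (A : ℝ → H →L[ℂ] H) (a b C k : ℝ) (hab : a < b)
    (hC : 0 < C) (hk : 1 / 2 < k)
    (hHolder : ∀ α₁ ∈ Set.Icc a b, ∀ α₂ ∈ Set.Icc a b,
      ‖A α₁ - A α₂‖ ≤ C * |α₁ - α₂| ^ k) :
    ∃ (L : H →L[ℂ] H) (M : ℝ), 0 ≤ M ∧ ∀ u v ξ : ℝ, a ≤ u → u < v → v ≤ b → ξ ∈ Set.Icc u v →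
      ‖(L - A ξ) * EH.E (Set.Ioc u v)‖ ≤ M * (2 * (v - u)) ^ k := by
  have hba : 0 < b - a := by linarith
  have hc : √2 < (2 : ℝ) ^ k := by
    rw [Real.sqrt_eq_rpow]; exact Real.rpow_lt_rpow_of_exponent_lt (by norm_num) hk
  set c : ℝ := (2 : ℝ) ^ k with hcdef
  have hs1 : 1 ≤ √2 := by rw [Real.one_le_sqrt]; norm_num
  have hc0 : 0 < c := by linarith
  have hcs : 0 < c - √2 := by linarith
  set M : ℝ := √2 * C * c * (1 + 1 / (c - √2)) with hMdef
  have hX : 0 < √2 * C * c := by positivity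
  have hM1 : √2 * C * c ≤ M := by
    rw [hMdef]
    apply le_mul_of_one_le_right hX.le
    have : 0 < 1 / (c - √2) := by positivity
    linarith
  have hM0 : 0 ≤ M := hX.le.trans hM1
  have hM2 : √2 * (M + C) ≤ M * c := by
    have h1 : M * (c - √2) = √2 * C * c * (c - √2) + √2 * C * c := by
      rw [hMdef]; field_simp
    have h2 : 0 ≤ √2 * C * c * (c - √2) := by positivity
    have h3 : √2 * C * 1 ≤ √2 * C * c := by gcongr; linarith
    nlinarith
  let h : ℕ → ℝ := fun m => (b - a) / 2 ^ m
  have hh : ∀ m, 0 < h m := fun m => by simp only [h]; positivity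
  have hN : ∀ m, SMg a (h m) (2 ^ m) = b := by
    intro m; simp only [SMg, h]; push_cast; field_simp; ring
  let T : ℕ → H →L[ℂ] H := fun m => SMT EH A a (h m) (2 ^ m)
  have hT : ∀ m j : ℕ, ∀ u v ξ : ℝ, a ≤ u → u ≤ v → v ≤ b → ξ ∈ Set.Icc u v →
      v - u ≤ 2 ^ j * h m →
      ‖(T m - A ξ) * EH.E (Set.Ioc u v)‖ ≤ M * (2 ^ j * h m) ^ k := by
    intro m j
    apply SM_dbl EH A a b C k (h m) M hC hk (hh m) hHolder (T m) hM2 hM0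
    intro u v ξ hau huv hvb hξ hl
    refine (SM_base EH A a b C k (h m) _ hC hk (hh m) (hN m) hHolder u v ξ hau huv hvb hξ hl).trans ?_
    have : 0 ≤ h m ^ k := Real.rpow_nonneg (hh m).le k
    gcongr
  have hg0 : ∀ m, SMg a (h m) 0 = a := fun m => by simp [SMg]
  have hmono : ∀ m i, SMg a (h m) i ≤ SMg a (h m) (i + 1) := fun m i => by
    rw [SMg_succ]; linarith [hh m]
  have hTP : ∀ m, T m * EH.E (Set.Ioc a b) = T m := by
    intro m
    simp only [T, SMT, Finset.sum_mul]
    refine Finset.sum_congr rfl fun j hj => ?_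
    have h1 := SM_mono _ (2 ^ m) (fun i _ => hmono m i) 0 j (by omega) (by simp at hj; omega)
    have h2 := SM_mono _ (2 ^ m) (fun i _ => hmono m i) (j + 1) (2 ^ m) (by simp at hj; omega) le_rfl
    rw [hg0] at h1
    rw [hN] at h2
    rw [mul_assoc, ← EH.inter, Set.inter_eq_left.2 (Set.Ioc_subset_Ioc h1 h2)]
  have hdist : ∀ m, dist (T m) (T (m + 1)) ≤ (M * (b - a) ^ k) * (√2 / c) ^ m := by
    intro m
    have hsum := SM_sum EH (SMg a (h m)) (2 ^ m) (fun i _ => hmono m i)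
    rw [hg0, hN] at hsum
    have heq : T (m + 1) - T m = ∑ j ∈ Finset.range (2 ^ m), (T (m + 1) - A (SMg a (h m) j)) *
        EH.E (Set.Ioc (SMg a (h m) j) (SMg a (h m) (j + 1))) := by
      conv_lhs => rw [← hTP (m + 1), ← hsum]
      simp only [T]
      rw [Finset.mul_sum]
      conv_lhs => rw [SMT.eq_def EH A a (h m)]
      rw [← Finset.sum_sub_distrib]
      exact Finset.sum_congr rfl fun j _ => (sub_mul _ _ _).symm
    rw [dist_comm, dist_eq_norm, heq]
    have hhk : h m ^ k = (b - a) ^ k / c ^ m := by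
      simp only [h]
      rw [Real.div_rpow hba.le (by positivity), hcdef, ← Real.rpow_natCast, ← Real.rpow_natCast,
        ← Real.rpow_mul (by norm_num), ← Real.rpow_mul (by norm_num), mul_comm k]
    apply SM_norm EH _ (2 ^ m) (fun i _ => measurableSet_Ioc)
      (SM_Ioc_disj _ _ (fun i _ => hmono m i)) _ (fun _ => M * h m ^ k)
    · intro j hj
      have h1 := SM_mono _ (2 ^ m) (fun i _ => hmono m i) 0 j (by omega) (by omega)
      have h2 := SM_mono _ (2 ^ m) (fun i _ => hmono m i) (j + 1) (2 ^ m) (by omega) le_rfl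
      rw [hg0] at h1
      rw [hN] at h2
      have h3 : (2 : ℝ) ^ 1 * h (m + 1) = h m := by simp only [h]; field_simp; ring
      have := hT (m + 1) 1 _ _ (SMg a (h m) j) h1 (hmono m j) h2 ⟨le_rfl, hmono m j⟩
        (by rw [h3, SMg_succ]; linarith)
      rwa [h3] at this
    · positivity
    · rw [hhk, Finset.sum_const, Finset.card_range, nsmul_eq_mul]
      push_cast
      have : (√2 ^ m) ^ 2 = (2 : ℝ) ^ m := by
        rw [← pow_mul, mul_comm, pow_mul, Real.sq_sqrt (by norm_num)]
      apply le_of_eq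
      rw [← this, div_pow]
      clear_value M c
      ring
  have hr : √2 / c < 1 := by rw [div_lt_one hc0]; exact hc
  obtain ⟨L, hL⟩ := cauchySeq_tendsto_of_complete (cauchySeq_of_le_geometric _ _ hr hdist)
  refine ⟨L, M, hM0, fun u v ξ hau huv hvb hξ => ?_⟩
  have hlim : Tendsto (fun m => ‖(T m - A ξ) * EH.E (Set.Ioc u v)‖) atTop
      (𝓝 ‖(L - A ξ) * EH.E (Set.Ioc u v)‖) :=
    ((hL.sub_const _).mul_const _).norm
  have hvu : 0 < v - u := by linarith
  have hh0 : Tendsto h atTop (𝓝 0) := by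
    have := (tendsto_pow_atTop_nhds_zero_of_lt_one (r := (1 / 2 : ℝ)) (by norm_num)
      (by norm_num)).const_mul (b - a)
    rw [mul_zero] at this
    refine this.congr fun m => ?_
    simp only [h, one_div, inv_pow]; rfl
  refine le_of_tendsto hlim ?_
  filter_upwards [hh0.eventually (gt_mem_nhds hvu)] with m hm
  obtain ⟨j, hj1, hj2⟩ := exists_nat_pow_near (x := (v - u) / h m) (y := (2 : ℝ))
    ((one_le_div (hh m)).2 hm.le) (by norm_num)
  rw [le_div_iff₀ (hh m)] at hj1
  rw [div_lt_iff₀ (hh m)] at hj2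
  refine (hT m (j + 1) u v ξ hau huv.le hvb hξ hj2.le).trans ?_
  have := hh m
  have hle : 2 ^ (j + 1) * h m ≤ 2 * (v - u) := by rw [pow_succ]; linarith
  have h0 : 0 ≤ 2 ^ (j + 1) * h m := by positivity
  exact mul_le_mul_of_nonneg_left (Real.rpow_le_rpow h0 hle (by linarith)) hM0

end Helpers

/-- If `H₀` is a bounded self-adjoint operator with spectrum in `[a,b]`
and `A : [a,b] → B(𝓗)` is operator-norm Hölder continuous with exponent `k > 1/2`, then
the spectral integral `∫_a^b A(α) E_{H₀}(dα)` exists as an operator-norm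
Riemann–Stieltjes integral. -/
theorem stmt7 {H : Type*} [NormedAddCommGroup H] [InnerProductSpace ℂ H] [CompleteSpace H]
    [TopologicalSpace.SeparableSpace H]
    (a b : ℝ) (hab : a ≤ b)
    (H₀ : H →L[ℂ] H) (hH₀ : IsSelfAdjoint H₀)
    (EH : SpectralMeasure H₀) (hspec : EH.E (Set.Icc a b) = 1)
    (A : ℝ → H →L[ℂ] H) (C k : ℝ) (hC : 0 < C) (hk : 1 / 2 < k)
    (hHolder : ∀ α₁ ∈ Set.Icc a b, ∀ α₂ ∈ Set.Icc a b,
      ‖A α₁ - A α₂‖ ≤ C * |α₁ - α₂| ^ k) :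
    ∃ L : H →L[ℂ] H, IsRSIntegral A EH.E a b L := by
  rcases hab.eq_or_lt with rfl | hab
  · refine ⟨0, fun ε hε => ⟨1, one_pos, fun n t ξ hn h0 h1 ht => ?_⟩⟩
    exfalso
    have h2 := SM_mono t n (fun i hi => (ht i hi).1.le) 1 n (by omega) le_rfl
    have h3 := (ht 0 hn).1
    rw [zero_add] at h3
    linarith
  obtain ⟨L, M, hM0, hL⟩ := SM_main EH A a b C k hab hC hk hHolder
  refine ⟨L * EH.E (Set.Ioc a b), fun ε hε => ?_⟩
  have hk2 : 0 < 2 * k - 1 := by linarith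
  -- a mesh with small total error
  have hlim : Tendsto (fun δ : ℝ => (M * 2 ^ k) ^ 2 * (b - a) * δ ^ (2 * k - 1)) (𝓝[>] 0) (𝓝 0) := by
    have h1 : Tendsto (fun δ : ℝ => δ ^ (2 * k - 1)) (𝓝[>] 0) (𝓝 0) := by
      have := (Real.continuousAt_rpow_const 0 (2 * k - 1) (Or.inr hk2.le)).tendsto
      rw [Real.zero_rpow hk2.ne'] at this
      exact this.mono_left nhdsWithin_le_nhds
    simpa using h1.const_mul ((M * 2 ^ k) ^ 2 * (b - a))
  obtain ⟨δ, hδ, hδ0⟩ := ((hlim.eventually (gt_mem_nhds (show (0 : ℝ) < (ε / 2) ^ 2 by positivity))).and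
    self_mem_nhdsWithin).exists
  have hδ0 : 0 < δ := hδ0
  refine ⟨δ, hδ0, fun n t ξ hn h0 h1 ht => ?_⟩
  have hmono : ∀ i < n, t i ≤ t (i + 1) := fun i hi => (ht i hi).1.le
  have hsum := SM_sum EH t n hmono
  rw [h0, h1] at hsum
  have heq : L * EH.E (Set.Ioc a b) -
      (∑ i ∈ Finset.range n, A (ξ i) * EH.E (Set.Ioc (t i) (t (i + 1)))) =
      ∑ i ∈ Finset.range n, (L - A (ξ i)) * EH.E (Set.Ioc (t i) (t (i + 1))) := by
    rw [← hsum, Finset.mul_sum, ← Finset.sum_sub_distrib]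
    exact Finset.sum_congr rfl fun j _ => (sub_mul _ _ _).symm
  rw [norm_sub_rev, heq]
  refine lt_of_le_of_lt (b := ε / 2) ?_ (by linarith)
  apply SM_norm EH _ n (fun i _ => measurableSet_Ioc) (SM_Ioc_disj t n hmono) _
    (fun i => M * (2 * (t (i + 1) - t i)) ^ k) _ _ (by positivity)
  · have hterm : ∀ i ∈ Finset.range n, (M * (2 * (t (i + 1) - t i)) ^ k) ^ 2 ≤
        (M * 2 ^ k) ^ 2 * δ ^ (2 * k - 1) * (t (i + 1) - t i) := by
      intro i hi
      obtain ⟨hi1, hi2, -⟩ := ht i (by simpa using hi)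
      have hl : 0 < t (i + 1) - t i := by linarith
      rw [Real.mul_rpow (by norm_num) hl.le, ← mul_assoc, mul_pow, mul_assoc _ (δ ^ _)]
      gcongr
      have : ((t (i + 1) - t i) ^ k) ^ 2 = (t (i + 1) - t i) ^ (2 * k - 1) * (t (i + 1) - t i) := by
        rw [← Real.rpow_natCast, ← Real.rpow_mul hl.le]
        nth_rewrite 3 [← Real.rpow_one (t (i + 1) - t i)]
        rw [← Real.rpow_add hl]
        congr 1; push_cast; ring
      rw [this]
      gcongr
    refine (Finset.sum_le_sum hterm).trans ?_
    rw [← Finset.mul_sum, Finset.sum_range_sub, h0, h1]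
    refine le_trans (le_of_eq ?_) hδ.le
    ring
  · intro i hi
    have ha := SM_mono t n hmono 0 i (by omega) (by omega)
    have hb := SM_mono t n hmono (i + 1) n (by omega) le_rfl
    rw [h0] at ha
    rw [h1] at hb
    exact hL _ _ _ ha (ht i hi).1 hb (ht i hi).2.2

end
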